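/- Correctness of the exact bribery reduction (cautious version): in the bribery construction with m < n, the following are equivalent: (i) there exists α : X → Bool such that ψ[α∪β] is true for every β : Y → Bool; (ii) there exists a profile J⃗' obtained from J⃗ = (J₁, J₂, J₃) by replacing at most one of its ballots by a rational ballot, such that every r* ∈ Kemeny(J⃗') sets the issue b_1 to true. -/

import Mathlib

/-!
Constraint-based judgment aggregation: the bribery construction.
Issues are modelled as an inductive type, ballots as functions `Issue n m → Bool`,
the integrity constraint as a predicate on ballots, and the formula ψ as a Boolean
function of the assignments to X and Y.
-/

namespace Brib

/-- The issues of the bribery construction. -/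
inductive Issue (n m : ℕ) : Type
  | x : Fin n → Issue n m
  | x' : Fin n → Issue n m
  | z : Fin n → Issue n m
  | y : Fin m → Issue n m
  | y' : Fin m → Issue n m
  | t : Fin m → Issue n m
  | u : Fin 3 → Fin (10 * n + 10 * m + 10) → Issue n m
  | a : Issue n m
  | b : Fin (2 * m + 4) → Issue n m
  deriving DecidableEq, Fintype

variable {n m : ℕ}

/-- Hamming distance between two ballots: the number of issues on which they differ. -/
def hamming {I : Type*} [Fintype I] (r r' : I → Bool) : ℕ :=
  (Finset.univ.filter (fun i => r i ≠ r' i)).card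

/-- Weighted Hamming distance: the sum of the weights of the issues on which the
two ballots differ. -/
def whamming {I : Type*} [Fintype I] (w : I → ℕ) (r r' : I → Bool) : ℕ :=
  ∑ i ∈ Finset.univ.filter (fun i => r i ≠ r' i), w i

def bigA (r : Issue n m → Bool) : Prop := ∀ i, r (.x i) ≠ r (.x' i)
def bigZ (r : Issue n m → Bool) : Prop := ∀ i, r (.z i) = true
def bigB (r : Issue n m → Bool) : Prop := ∀ j, r (.y j) ≠ r (.y' j)
def bigT (r : Issue n m → Bool) : Prop := ∀ j, r (.t j) = true
def bigC (r : Issue n m → Bool) : Prop := ∀ j, r (.b j) = true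

/-- The part Γ₀ of the integrity constraint. -/
def gamma0 (psi : (Fin n → Bool) → (Fin m → Bool) → Bool) (r : Issue n m → Bool) : Prop :=
  (r .a = true ∨ bigC r) ∧ (r .a = true → ∀ j, r (.b j) = false) ∧
  (bigC r → r .a = false) ∧
  (bigA r ∨ bigZ r) ∧ (bigA r → ∀ i, r (.z i) = false) ∧
  Xor' (bigB r) (bigT r) ∧ (bigB r → ∀ j, r (.t j) = false) ∧
  (bigZ r → ∀ i, r (.x i) = false ∧ r (.x' i) = false) ∧
  (bigT r → ∀ j, r (.y j) = false ∧ r (.y' j) = false) ∧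
  (bigZ r → (r .a = true ∧ bigT r)) ∧
  ((bigA r ∧ bigB r) →
    (psi (fun i => r (.x i)) (fun j => r (.y j)) = false ∧ r .a = true)) ∧
  ((bigA r ∧ bigT r) → bigC r)

/-- A ballot is rational if it satisfies the integrity constraint
`Γ = Γ₀ ∨ ⋁_{i∈[3]} ⋀_{ℓ∈[u]} u_{i,ℓ}`. -/
def rational (psi : (Fin n → Bool) → (Fin m → Bool) → Bool) (r : Issue n m → Bool) : Prop :=
  gamma0 psi r ∨ ∃ i : Fin 3, ∀ ℓ, r (.u i ℓ) = true

/-- The profile J⃗ = (J₁, J₂, J₃): the ballot J_{k+1} sets exactly the issues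
u_{k+1,ℓ} to true. -/
def Jp (k : Fin 3) : Issue n m → Bool := fun i => match i with
  | .u k' _ => k' == k
  | _ => false

/-- The briber's desired ballot J₀: true exactly on the b- and u₁-issues. -/
def Jzero : Issue n m → Bool := fun i => match i with
  | .b _ => true
  | .u k _ => k == 0
  | _ => false

/-- The briber's weight function: weight 1 on each b-issue, weight 0 elsewhere. -/
def wt : Issue n m → ℕ := fun i => match i with
  | .b _ => 1
  | _ => 0

/-- Cumulative Hamming distance of a ballot to a profile of three ballots. -/
def dist3 (r p1 p2 p3 : Issue n m → Bool) : ℕ :=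
  hamming r p1 + hamming r p2 + hamming r p3

/-- Membership in the set of Kemeny outcomes of the profile (p1, p2, p3):
a rational ballot minimizing the cumulative Hamming distance among rational ballots. -/
def kemenyMem (psi : (Fin n → Bool) → (Fin m → Bool) → Bool)
    (p1 p2 p3 r : Issue n m → Bool) : Prop :=
  rational psi r ∧ ∀ r', rational psi r' → dist3 r p1 p2 p3 ≤ dist3 r' p1 p2 p3

end Brib

/-!
Call the number of ballots of a profile rejecting an issue minus the number accepting it the
rejection margin of the issue. The distance of a ballot `r` to the profile is a constant plus the
sum of the margins of the issues accepted by `r`, so Kemeny outcomes are the rational ballots of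
least accepted weight.

*From a winning `α` to a bribe.* Replace `J₁` by the ballot `x = α`, `x' = ¬α` satisfying
`A ∧ T ∧ C`. All margins become positive and this ballot has weight `n + 3m + 4`. A rational ballot
rejecting some `b_j` either accepts a whole block `u_{i,·}`, of weight at least
`10n + 10m + 10`, or satisfies `Z ∧ T ∧ a`, of weight at least `3n + m + 3`, or satisfies
`A ∧ B ∧ a ∧ ¬ψ`. In the last case its `x`-part differs from `α`, and its weight is at least
`(n + 2) + 3m + 3`. As `m < n`, all three bounds exceed `n + 3m + 4`.

*From a bribe to a winning `α`.* After one replacement, every issue outside the `u`-blocks has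
margin 1 or 3. Suppose every `α` has some `β` falsifying `ψ`, and let `r` be a rational ballot
accepting some `b_j`. If `r` accepts a whole block, then rejecting `b_j` improves it. Otherwise `r`
satisfies `A ∧ T ∧ C`, and passing to `A ∧ B ∧ a` with `y = β` saves at least
`m + (2m + 4)` and costs at most `3m + 3`. So `r` is not a Kemeny outcome.
-/

namespace Brib

section Margin

variable {V I : Type*} [Fintype V]

/-- The number of ballots of the profile `p` rejecting the issue `i` minus the number of ballots
accepting it. -/
def rejectionMargin (p : V → I → Bool) (i : I) : ℤ :=
  Fintype.card V - 2 * (Finset.univ.filter fun v => p v i = true).card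

lemma card_ne_eq_card_accept_add (p : V → I → Bool) (r : I → Bool) (i : I) :
    ((Finset.univ.filter fun v => r i ≠ p v i).card : ℤ) =
      (Finset.univ.filter fun v => p v i = true).card +
        bif r i then rejectionMargin p i else 0 := by
  have hcard := Finset.card_filter_add_card_filter_not (s := Finset.univ) fun v => p v i = true
  rw [Finset.card_univ] at hcard
  cases r i
  · simp
  · simp only [ne_eq, eq_comm (a := true), cond_true, rejectionMargin]
    omega

lemma rejectionMargin_le_card (p : V → I → Bool) (i : I) :
    rejectionMargin p i ≤ Fintype.card V := by
  unfold rejectionMargin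
  omega

lemma card_sub_two_mul_le_rejectionMargin {p q : V → I → Bool}
    [DecidablePred fun v => p v ≠ q v] {i : I} (hq : ∀ v, q v i = false) :
    (Fintype.card V : ℤ) - 2 * (Finset.univ.filter fun v => p v ≠ q v).card ≤
      rejectionMargin p i := by
  have hsub : (Finset.univ.filter fun v => p v i = true).card ≤
      (Finset.univ.filter fun v => p v ≠ q v).card := by
    refine Finset.card_le_card (Finset.monotone_filter_right _ fun v _ hv heq => ?_)
    simp [heq, hq v] at hv
  unfold rejectionMargin
  omega

variable [Fintype I]

/-- The total weight of the issues accepted by the ballot `r`. The codomain of the weights is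
arbitrary because rejection margins are integers that may be negative, while the margins of
`bribedProfile` are natural numbers. -/
def acceptedWeight {M : Type*} [AddCommMonoid M] (w : I → M) (r : I → Bool) : M :=
  ∑ i, bif r i then w i else 0

lemma acceptedWeight_natCast {R : Type*} [AddCommMonoidWithOne R] (w : I → ℕ) (r : I → Bool) :
    acceptedWeight (fun i => (w i : R)) r = acceptedWeight w r := by
  simp only [acceptedWeight, Nat.cast_sum, Bool.apply_cond, Nat.cast_zero]

lemma acceptedWeight_update_false_add [DecidableEq I] {M : Type*} [AddCommMonoid M] (w : I → M)
    {r : I → Bool} {i : I} (hi : r i = true) :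
    acceptedWeight w (Function.update r i false) + w i = acceptedWeight w r := by
  unfold acceptedWeight
  rw [← Finset.sum_erase_add _ _ (Finset.mem_univ i),
    ← Finset.sum_erase_add Finset.univ _ (Finset.mem_univ i), Function.update_self, hi, cond_false,
    cond_true, add_zero]
  congr 1
  refine Finset.sum_congr rfl fun j hj => ?_
  rw [Function.update_of_ne (Finset.ne_of_mem_erase hj)]

lemma sum_hamming_eq_add_acceptedWeight (p : V → I → Bool) (r : I → Bool) :
    ((∑ v, hamming r (p v) : ℕ) : ℤ) =
      ∑ i, ((Finset.univ.filter fun v => p v i = true).card : ℤ) +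
        acceptedWeight (rejectionMargin p) r := by
  have hswap : ∑ v, hamming r (p v) = ∑ i, (Finset.univ.filter fun v => r i ≠ p v i).card := by
    simp only [hamming, Finset.card_filter]
    exact Finset.sum_comm
  rw [hswap, Nat.cast_sum, acceptedWeight, ← Finset.sum_add_distrib]
  exact Finset.sum_congr rfl fun i _ => card_ne_eq_card_accept_add p r i

end Margin

variable {n m : ℕ} {psi : (Fin n → Bool) → (Fin m → Bool) → Bool}

section Kemeny

variable {p : Fin 3 → Issue n m → Bool} {r : Issue n m → Bool}

lemma kemenyMem_iff_acceptedWeight_le :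
    kemenyMem psi (p 0) (p 1) (p 2) r ↔ rational psi r ∧ ∀ r', rational psi r' →
      acceptedWeight (rejectionMargin p) r ≤ acceptedWeight (rejectionMargin p) r' := by
  have hdist (s : Issue n m → Bool) : dist3 s (p 0) (p 1) (p 2) = ∑ k, hamming s (p k) :=
    (Fin.sum_univ_three fun k => hamming s (p k)).symm
  simp only [kemenyMem, hdist, ← Int.ofNat_le, sum_hamming_eq_add_acceptedWeight,
    add_le_add_iff_left]

lemma rational_Jp (k : Fin 3) : rational psi (Jp k) :=
  Or.inr ⟨k, fun _ => beq_self_eq_true k⟩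

lemma exists_kemenyMem (psi : (Fin n → Bool) → (Fin m → Bool) → Bool)
    (p₁ p₂ p₃ : Issue n m → Bool) : ∃ r, kemenyMem psi p₁ p₂ p₃ r :=
  Set.exists_min_image {r | rational psi r} (fun r => dist3 r p₁ p₂ p₃) (Set.toFinite _)
    ⟨Jp 0, rational_Jp 0⟩

end Kemeny

section Issue

/-- The issues as an iterated disjoint sum of their kinds. -/
def issueEquiv (n m : ℕ) : Issue n m ≃
    (Fin n ⊕ Fin n ⊕ Fin n) ⊕ (Fin m ⊕ Fin m ⊕ Fin m) ⊕
      (Fin 3 × Fin (10 * n + 10 * m + 10)) ⊕ Unit ⊕ Fin (2 * m + 4) where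
  toFun
    | .x i => .inl (.inl i)
    | .x' i => .inl (.inr (.inl i))
    | .z i => .inl (.inr (.inr i))
    | .y j => .inr (.inl (.inl j))
    | .y' j => .inr (.inl (.inr (.inl j)))
    | .t j => .inr (.inl (.inr (.inr j)))
    | .u k l => .inr (.inr (.inl (k, l)))
    | .a => .inr (.inr (.inr (.inl ())))
    | .b j => .inr (.inr (.inr (.inr j)))
  invFun
    | .inl (.inl i) => .x i
    | .inl (.inr (.inl i)) => .x' i
    | .inl (.inr (.inr i)) => .z i
    | .inr (.inl (.inl j)) => .y j
    | .inr (.inl (.inr (.inl j))) => .y' j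
    | .inr (.inl (.inr (.inr j))) => .t j
    | .inr (.inr (.inl (k, l))) => .u k l
    | .inr (.inr (.inr (.inl ()))) => .a
    | .inr (.inr (.inr (.inr j))) => .b j
  left_inv i := by cases i <;> rfl
  right_inv s := by rcases s with (_ | _ | _) | (_ | _ | _) | _ | _ | _ <;> rfl

lemma sum_issue {M : Type*} [AddCommMonoid M] (f : Issue n m → M) :
    ∑ i, f i = ∑ i, (f (.x i) + f (.x' i)) + ∑ i, f (.z i) + ∑ j, (f (.y j) + f (.y' j))
      + ∑ j, f (.t j) + ∑ k, ∑ l, f (.u k l) + f .a + ∑ j, f (.b j) := by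
  rw [← (issueEquiv n m).symm.sum_comp f]
  simp only [Fintype.sum_sum_type, Fintype.sum_prod_type, Finset.sum_add_distrib,
    Finset.univ_unique, Finset.sum_singleton, issueEquiv, Equiv.coe_fn_symm_mk]
  abel

end Issue

section Gamma0

variable {r : Issue n m → Bool}

lemma gamma0.trichotomy (hr : gamma0 psi r) :
    (bigA r ∧ bigB r ∧ psi (fun i => r (.x i)) (fun j => r (.y j)) = false ∧ r .a = true) ∨
      (bigZ r ∧ bigT r ∧ r .a = true) ∨ (bigA r ∧ bigT r ∧ bigC r) := by
  obtain ⟨-, -, -, hAZ, -, hBT, -, -, -, hZ, hAB, hAT⟩ := hr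
  rcases hAZ with hA | hz
  · rcases hBT with ⟨hB, -⟩ | ⟨hT, -⟩
    · exact .inl ⟨hA, hB, hAB ⟨hA, hB⟩⟩
    · exact .inr (.inr ⟨hA, hT, hAT ⟨hA, hT⟩⟩)
  · exact .inr (.inl ⟨hz, (hZ hz).2, (hZ hz).1⟩)

lemma gamma0.a_eq_false_of_b (hr : gamma0 psi r) {j : Fin (2 * m + 4)} (hb : r (.b j) = true) :
    r .a = false := by
  by_contra ha
  exact Bool.false_ne_true ((hr.2.1 (by simpa using ha) j).symm.trans hb)

lemma gamma0.bigA_bigT_bigC_of_b (hr : gamma0 psi r) {j : Fin (2 * m + 4)}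
    (hb : r (.b j) = true) : bigA r ∧ bigT r ∧ bigC r := by
  have ha := hr.a_eq_false_of_b hb
  rcases hr.trichotomy with ⟨-, -, -, ha'⟩ | ⟨-, -, ha'⟩ | h
  · simp [ha] at ha'
  · simp [ha] at ha'
  · exact h

lemma gamma0.z_eq_false (hr : gamma0 psi r) (hA : bigA r) (i : Fin n) : r (.z i) = false := by
  obtain ⟨-, -, -, -, hz, -⟩ := hr
  exact hz hA i

lemma gamma0.y_eq_false (hr : gamma0 psi r) (hT : bigT r) (j : Fin m) :
    r (.y j) = false ∧ r (.y' j) = false := by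
  obtain ⟨-, -, -, -, -, -, -, -, hy, -⟩ := hr
  exact hy hT j

end Gamma0

section Bribe

/-- The ballot offered by the briber: it satisfies `A ∧ T ∧ C`, has `x`-part `α`, and rejects all
other issues. -/
def bribe (α : Fin n → Bool) : Issue n m → Bool
  | .x i => α i
  | .x' i => !α i
  | .t _ => true
  | .b _ => true
  | _ => false

/-- The profile `J⃗` with `J₁` replaced by `bribe α`. -/
def bribedProfile (α : Fin n → Bool) : Fin 3 → Issue n m → Bool :=
  Function.update Jp 0 (bribe α)

/-- The rejection margins of `bribedProfile α`: an issue has margin 1 if one of the three ballots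
accepts it and 3 if none does. -/
def bribedMargin (α : Fin n → Bool) : Issue n m → ℕ
  | .x i => if α i then 1 else 3
  | .x' i => if α i then 3 else 1
  | .u k _ => if k = 0 then 3 else 1
  | .t _ => 1
  | .b _ => 1
  | _ => 3

lemma gamma0_bribe (hn : 0 < n) (hm : 0 < m) (α : Fin n → Bool) : gamma0 psi (bribe α) := by
  have hA : bigA (bribe α : Issue n m → Bool) := fun i => by simp [bribe]
  have hT : bigT (bribe α : Issue n m → Bool) := fun _ => rfl
  have hC : bigC (bribe α : Issue n m → Bool) := fun _ => rfl
  have hZ : ¬bigZ (bribe α : Issue n m → Bool) := fun h => Bool.false_ne_true (h ⟨0, hn⟩)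
  have hB : ¬bigB (bribe α : Issue n m → Bool) := fun h => h ⟨0, hm⟩ rfl
  exact ⟨.inr hC, fun h => absurd h Bool.false_ne_true, fun _ => rfl, .inl hA, fun _ _ => rfl,
    .inr ⟨hT, hB⟩, fun h => absurd h hB, fun h => absurd h hZ, fun _ _ => ⟨rfl, rfl⟩,
    fun h => absurd h hZ, fun h => absurd h.2 hB, fun _ => hC⟩

lemma rational_bribedProfile (hn : 0 < n) (hm : 0 < m) (α : Fin n → Bool) (k : Fin 3) :
    rational psi (bribedProfile α k) := by
  by_cases hk : k = 0
  · subst hk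
    exact .inl (gamma0_bribe hn hm α)
  · rw [bribedProfile, Function.update_of_ne hk]
    exact rational_Jp k

lemma card_bribedProfile_ne_Jp_le_one (α : Fin n → Bool) :
    (Finset.univ.filter fun k => (bribedProfile α k : Issue n m → Bool) ≠ Jp k).card ≤ 1 := by
  refine Finset.card_le_one_iff_subset_singleton.2 ⟨0, fun k hk => Finset.mem_singleton.2 ?_⟩
  by_contra h
  exact (Finset.mem_filter.1 hk).2 (Function.update_of_ne h _ _)

lemma rejectionMargin_bribedProfile (α : Fin n → Bool) :
    rejectionMargin (bribedProfile α : Fin 3 → Issue n m → Bool) =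
      fun i => (bribedMargin α i : ℤ) := by
  funext i
  rw [rejectionMargin, Finset.card_filter, Fin.sum_univ_three]
  cases i with
  | x i | x' i => cases h : α i <;> simp [bribedProfile, bribe, Jp, bribedMargin, h]
  | u k l => fin_cases k <;> simp [bribedProfile, bribe, Jp, bribedMargin]
  | _ => simp [bribedProfile, bribe, Jp, bribedMargin]

lemma acceptedWeight_bribe (α : Fin n → Bool) :
    acceptedWeight (bribedMargin α) (bribe α : Issue n m → Bool) = n + 3 * m + 4 := by
  have hx (i : Fin n) :
      ((bif α i then if α i then 1 else 3 else 0) + bif !α i then if α i then 3 else 1 else 0) =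
        1 := by
    cases α i <;> rfl
  simp only [acceptedWeight, sum_issue, bribe, bribedMargin, hx, cond_true, cond_false,
    Finset.sum_const, Finset.card_univ, Fintype.card_fin, smul_eq_mul, mul_zero]
  ring

variable {α : Fin n → Bool} {r : Issue n m → Bool}

lemma le_acceptedWeight_bribedMargin_of_block {k : Fin 3} (hk : ∀ l, r (.u k l) = true) :
    10 * n + 10 * m + 10 ≤ acceptedWeight (bribedMargin α) r := by
  have hblock : 10 * n + 10 * m + 10 ≤
      ∑ l, bif r (.u k l) then bribedMargin α (.u k l) else 0 := by
    simp only [hk, cond_true, bribedMargin]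
    split_ifs <;> simp
  have hle := Finset.single_le_sum
    (f := fun k => ∑ l, bif r (.u k l) then bribedMargin α (.u k l) else 0)
    (fun _ _ => Nat.zero_le _) (Finset.mem_univ k)
  rw [acceptedWeight, sum_issue]
  omega

lemma le_acceptedWeight_bribedMargin_of_bigZ_bigT (hZ : bigZ r) (hT : bigT r) (ha : r .a = true) :
    3 * n + m + 3 ≤ acceptedWeight (bribedMargin α) r := by
  have hz : ∑ i, (bif r (.z i) then bribedMargin α (.z i : Issue n m) else 0) = n * 3 := by
    simp [hZ _, bribedMargin]
  have ht : ∑ j, (bif r (.t j) then bribedMargin α (.t j) else 0) = m := by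
    simp [hT _, bribedMargin]
  have ha' : (bif r .a then bribedMargin α (.a : Issue n m) else 0) = 3 := by
    rw [ha]
    rfl
  rw [acceptedWeight, sum_issue]
  omega

lemma bigA.add_two_le_sum_bribedMargin (hA : bigA r) (hne : (fun i => r (.x i)) ≠ α) :
    n + 2 ≤ ∑ i, ((bif r (.x i) then bribedMargin α (.x i : Issue n m) else 0) +
      bif r (.x' i) then bribedMargin α (.x' i : Issue n m) else 0) := by
  obtain ⟨i₀, hi₀⟩ := Function.ne_iff.1 hne
  have hpair (i : Fin n) :
      (bif r (.x i) then bribedMargin α (.x i : Issue n m) else 0) +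
        (bif r (.x' i) then bribedMargin α (.x' i : Issue n m) else 0) =
      1 + if r (.x i) ≠ α i then 2 else 0 := by
    have hi := hA i
    revert hi
    cases h : α i <;> cases r (.x i) <;> cases r (.x' i) <;> simp [bribedMargin, h]
  have htwo : 2 ≤ ∑ i, if r (.x i) ≠ α i then 2 else 0 :=
    (if_pos hi₀).ge.trans <| Finset.single_le_sum
      (f := fun i => if r (.x i) ≠ α i then 2 else 0) (fun _ _ => Nat.zero_le _)
      (Finset.mem_univ i₀)
  simp only [hpair, Finset.sum_add_distrib, Finset.sum_const, Finset.card_univ, Fintype.card_fin,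
    smul_eq_mul, mul_one]
  omega

lemma bigB.sum_bribedMargin_eq (hB : bigB r) :
    ∑ j, ((bif r (.y j) then bribedMargin α (.y j : Issue n m) else 0) +
      bif r (.y' j) then bribedMargin α (.y' j : Issue n m) else 0) = m * 3 := by
  have hpair (j : Fin m) :
      (bif r (.y j) then bribedMargin α (.y j : Issue n m) else 0) +
        (bif r (.y' j) then bribedMargin α (.y' j : Issue n m) else 0) = 3 := by
    have hj := hB j
    revert hj
    cases r (.y j) <;> cases r (.y' j) <;> simp [bribedMargin]
  simp [hpair]

lemma le_acceptedWeight_bribedMargin_of_bigA_bigB (hA : bigA r) (hB : bigB r) (ha : r .a = true)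
    (hne : (fun i => r (.x i)) ≠ α) :
    n + 3 * m + 5 ≤ acceptedWeight (bribedMargin α) r := by
  have hx := hA.add_two_le_sum_bribedMargin hne
  have hy := hB.sum_bribedMargin_eq (α := α)
  have ha' : (bif r .a then bribedMargin α (.a : Issue n m) else 0) = 3 := by
    rw [ha]
    rfl
  rw [acceptedWeight, sum_issue]
  omega

lemma acceptedWeight_bribe_lt (hmn : m < n) (hα : ∀ β, psi α β = true) (hr : rational psi r)
    {j : Fin (2 * m + 4)} (hb : r (.b j) = false) :
    acceptedWeight (bribedMargin α) (bribe α : Issue n m → Bool) <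
      acceptedWeight (bribedMargin α) r := by
  rw [acceptedWeight_bribe]
  rcases hr with hr | ⟨k, hk⟩
  · rcases hr.trichotomy with ⟨hA, hB, hpsi, ha⟩ | ⟨hZ, hT, ha⟩ | ⟨-, -, hC⟩
    · have hne : (fun i => r (.x i)) ≠ α := by
        rintro rfl
        simp [hα] at hpsi
      exact le_acceptedWeight_bribedMargin_of_bigA_bigB hA hB ha hne
    · have := le_acceptedWeight_bribedMargin_of_bigZ_bigT (α := α) hZ hT ha
      omega
    · simp [hC j] at hb
  · have := le_acceptedWeight_bribedMargin_of_block (α := α) hk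
    omega

lemma b_eq_true_of_kemenyMem_bribedProfile (hm : 0 < m) (hmn : m < n)
    (hα : ∀ β, psi α β = true)
    (hr : kemenyMem psi (bribedProfile α 0) (bribedProfile α 1) (bribedProfile α 2) r)
    (j : Fin (2 * m + 4)) : r (.b j) = true := by
  rw [kemenyMem_iff_acceptedWeight_le, rejectionMargin_bribedProfile] at hr
  by_contra hb
  have hlt := acceptedWeight_bribe_lt hmn hα hr.1 (Bool.eq_false_iff.2 hb)
  have hle := hr.2 (bribe α) (.inl (gamma0_bribe (by omega) hm α))
  rw [acceptedWeight_natCast, acceptedWeight_natCast] at hle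
  omega

end Bribe

section Refutation

/-- The ballot obtained from `r` by passing from `T ∧ C` to `B ∧ a` with `y`-part `β`, keeping the
`x`-, `z`- and `u`-issues. It is a better rational ballot than `r` when `β` falsifies `ψ`. -/
def refutation (r : Issue n m → Bool) (β : Fin m → Bool) : Issue n m → Bool
  | .y j => β j
  | .y' j => !β j
  | .t _ => false
  | .a => true
  | .b _ => false
  | i => r i

variable {r : Issue n m → Bool} {β : Fin m → Bool}

lemma gamma0_refutation (hn : 0 < n) (hm : 0 < m) (hA : bigA r) (hz : ∀ i, r (.z i) = false)
    (hβ : psi (fun i => r (.x i)) β = false) : gamma0 psi (refutation r β) := by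
  have hA' : bigA (refutation r β) := hA
  have hB : bigB (refutation r β) := fun j => by simp [refutation]
  have hZ : ¬bigZ (refutation r β) := fun h => Bool.false_ne_true ((hz _).symm.trans (h ⟨0, hn⟩))
  have hT : ¬bigT (refutation r β) := fun h => Bool.false_ne_true (h ⟨0, hm⟩)
  have hC : ¬bigC (refutation r β) := fun h => Bool.false_ne_true (h 0)
  exact ⟨.inl rfl, fun _ _ => rfl, fun h => absurd h hC, .inl hA', fun _ => hz, .inl ⟨hB, hT⟩,
    fun _ _ => rfl, fun h => absurd h hZ, fun h => absurd h hT, fun h => absurd h hZ,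
    fun _ => ⟨hβ, rfl⟩, fun h => absurd h.2 hT⟩

lemma acceptedWeight_refutation_lt {w : Issue n m → ℤ}
    (hw : ∀ i, (∀ k, Jp k i = false) → w i ∈ Set.Icc 1 3) (hT : bigT r) (hC : bigC r)
    (ha : r .a = false) (hy : ∀ j, r (.y j) = false ∧ r (.y' j) = false) :
    acceptedWeight w (refutation r β) < acceptedWeight w r := by
  have hcost_y :
      ∑ j, ((bif β j then w (.y j) else 0) + bif !β j then w (.y' j) else 0) ≤ m * 3 := by
    have hpair (j : Fin m) :
        ((bif β j then w (.y j) else 0) + bif !β j then w (.y' j) else 0) ≤ 3 := by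
      cases β j
      · simpa using (hw (.y' j) fun _ => rfl).2
      · simpa using (hw (.y j) fun _ => rfl).2
    simpa using Finset.sum_le_card_nsmul Finset.univ _ _ fun j _ => hpair j
  have hcost_a : w .a ≤ 3 := (hw .a fun _ => rfl).2
  have hsave_t : (m : ℤ) ≤ ∑ j, w (.t j) := by
    simpa using Finset.card_nsmul_le_sum Finset.univ (fun j => w (.t j)) 1
      fun j _ => (hw (.t j) fun _ => rfl).1
  have hsave_b : (2 * m + 4 : ℤ) ≤ ∑ j, w (.b j) := by
    simpa using Finset.card_nsmul_le_sum Finset.univ (fun j => w (.b j)) 1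
      fun j _ => (hw (.b j) fun _ => rfl).1
  simp only [acceptedWeight, sum_issue, refutation, hT _, hC _, ha, hy, cond_true,
    cond_false, Finset.sum_const_zero, add_zero]
  linarith

variable {p : Fin 3 → Issue n m → Bool}

lemma rejectionMargin_mem_Icc_of_card_ne_Jp_le_one
    (hp : (Finset.univ.filter fun k => p k ≠ Jp k).card ≤ 1) {i : Issue n m}
    (hi : ∀ k, Jp k i = false) : rejectionMargin p i ∈ Set.Icc 1 3 := by
  have hlower := card_sub_two_mul_le_rejectionMargin (p := p) hi
  have hupper := rejectionMargin_le_card p i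
  rw [Fintype.card_fin] at hlower hupper
  constructor <;> omega

lemma b_eq_false_of_kemenyMem (hn : 0 < n) (hm : 0 < m)
    (hp : (Finset.univ.filter fun k => p k ≠ Jp k).card ≤ 1)
    (hpsi : ∀ α, ∃ β, psi α β = false) (hr : kemenyMem psi (p 0) (p 1) (p 2) r)
    (j : Fin (2 * m + 4)) : r (.b j) = false := by
  obtain ⟨hrat, hmin⟩ := kemenyMem_iff_acceptedWeight_le.1 hr
  by_contra hb
  rw [Bool.not_eq_false] at hb
  rcases hrat with hγ | ⟨k, hk⟩
  · obtain ⟨hA, hT, hC⟩ := hγ.bigA_bigT_bigC_of_b hb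
    obtain ⟨β, hβ⟩ := hpsi fun i => r (.x i)
    have hle := hmin _ (.inl (gamma0_refutation hn hm hA (hγ.z_eq_false hA) hβ))
    exact hle.not_gt <| acceptedWeight_refutation_lt
      (fun _ => rejectionMargin_mem_Icc_of_card_ne_Jp_le_one hp) hT hC (hγ.a_eq_false_of_b hb)
      (hγ.y_eq_false hT)
  · have hle := hmin (Function.update r (.b j) false) (.inr ⟨k, fun l => by simp [hk l]⟩)
    have hupd := acceptedWeight_update_false_add (rejectionMargin p) hb
    have hpos := (rejectionMargin_mem_Icc_of_card_ne_Jp_le_one hp (i := .b j) fun _ => rfl).1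
    linarith

end Refutation

end Brib

open Brib in
/-- correctness of the cautious exact bribery reduction: with m < n,
there exists α with ψ[α∪β] true for every β
iff
one can replace at most one ballot of J⃗ = (J₁, J₂, J₃) by a rational ballot, obtaining
a profile J⃗', such that every Kemeny outcome of J⃗' sets the issue b₁ to true. -/
theorem brib_exact_reduction_correct_cautious (n m : ℕ) (hn : 0 < n) (hm : 0 < m)
    (hmn : m < n)
    (psi : (Fin n → Bool) → (Fin m → Bool) → Bool) :
    (∃ α : Fin n → Bool, ∀ β : Fin m → Bool, psi α β = true) ↔
    (∃ J' : Fin 3 → Issue n m → Bool,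
      (∀ k, rational psi (J' k)) ∧
      (Finset.univ.filter (fun k : Fin 3 => J' k ≠ Jp k)).card ≤ 1 ∧
      (∀ r : Issue n m → Bool, kemenyMem psi (J' 0) (J' 1) (J' 2) r →
        r (.b ⟨0, by omega⟩) = true)) := by
  constructor
  · rintro ⟨α, hα⟩
    exact ⟨bribedProfile α, rational_bribedProfile hn hm α, card_bribedProfile_ne_Jp_le_one α,
      fun r hr => b_eq_true_of_kemenyMem_bribedProfile hm hmn hα hr _⟩
  · rintro ⟨J', -, hcard, hJ'⟩
    by_contra! hpsi
    simp only [ne_eq, Bool.not_eq_true] at hpsi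
    obtain ⟨r, hr⟩ := exists_kemenyMem psi (J' 0) (J' 1) (J' 2)
    exact Bool.false_ne_true
      ((b_eq_false_of_kemenyMem hn hm hcard hpsi hr _).symm.trans (hJ' r hr))
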